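/- Let d ≥ 2 be an integer and let (b_n)_{n≥0} be a summable sequence of nonnegative real numbers. Then: (i) for every integer m ≥ 0 the series Σ_{j=0}^∞ b_{m+2j} · (m+2j)! / (j! · 2^{2j} · (m+(d+1)/2)_j) converges; (ii) setting Υ_d(b)_m = (√π/(2^{m+d−2} Γ(d/2))) · (Γ(m+d−1)/(m! Γ(m+(d−1)/2))) · Σ_{j=0}^∞ b_{m+2j} (m+2j)!/(j! 2^{2j} (m+(d+1)/2)_j), every Υ_d(b)_m is nonnegative, the sequence (Υ_d(b)_m)_{m≥0} is summable, and Σ_{m=0}^∞ Υ_d(b)_m = Σ_{n=0}^∞ b_n. In particular, Υ_d maps probability mass sequences (Schoenberg sequences) to probability mass sequences (d-Schoenberg sequences). -/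

import Mathlib

/-!
Write `r = (d - 1) / 2`. The normalised Gegenbauer polynomials `P_m = C_m^r / C_m^r(1)` satisfy
`x P_m = α_m P_{m+1} + β_m P_{m-1}` with `α_m = (m + 2r) / (2(m + r))`, `β_m = m / (2(m + r))`.
These are nonnegative and add up to `1`, so they are the transition probabilities of a
nearest-neighbour random walk on `ℕ`, and the coefficient of `P_m` in the expansion of `x ^ n` is
the probability `walk r n m` that this walk, started at `0`, is at `m` after `n` steps.

The explicit form of these probabilities (`walk_eq_coef`, obtained by checking the recurrence)
is exactly the kernel of `Υ_d`: up to Legendre's duplication formula (`prefactor_eq`),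
`Υ_d(b)_m = ∑_n b_n * walk r n m`. As every `walk r n` is a probability distribution on `ℕ`
(`hasSum_walk`), exchanging the order of summation of the nonnegative double series
`∑_n ∑_m b_n * walk r n m` gives all the claims.
-/

open scoped Real BigOperators

/-- The rising factorial (Pochhammer symbol) `(x)_j = x(x+1)⋯(x+j-1)`. -/
noncomputable def poch (x : ℝ) (j : ℕ) : ℝ := ∏ i ∈ Finset.range j, (x + i)

/-- The projection operator `Υ_d` mapping Schoenberg sequences to `d`-Schoenberg sequences. -/
noncomputable def upsilon (d : ℕ) (b : ℕ → ℝ) (m : ℕ) : ℝ :=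
  Real.sqrt π / ((2 : ℝ) ^ ((m : ℝ) + d - 2) * Real.Gamma ((d : ℝ) / 2)) *
    (Real.Gamma ((m : ℝ) + d - 1) /
      ((Nat.factorial m : ℝ) * Real.Gamma ((m : ℝ) + ((d : ℝ) - 1) / 2))) *
    ∑' j : ℕ,
      b (m + 2 * j) * (Nat.factorial (m + 2 * j) : ℝ) /
        ((Nat.factorial j : ℝ) * (2 : ℝ) ^ (2 * j) * poch ((m : ℝ) + ((d : ℝ) + 1) / 2) j)

/-- The probability that the Gegenbauer random walk with parameter `r`, started at `0`, is at `m`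
after `n` steps; equivalently, the coefficient of the normalised Gegenbauer polynomial of degree
`m` in `x ^ n`. From `m` the walk moves up with probability `(m + 2r) / (2(m + r))` and down with
probability `m / (2(m + r))`. -/
noncomputable def walk (r : ℝ) : ℕ → ℕ → ℝ
  | 0, 0 => 1
  | 0, _ + 1 => 0
  | n + 1, 0 => 1 / (2 * (1 + r)) * walk r n 1
  | n + 1, m + 1 => (m + 2 * r) / (2 * (m + r)) * walk r n m
      + (m + 2) / (2 * (m + 2 + r)) * walk r n (m + 2)

lemma walk_nonneg {r : ℝ} (hr : 0 < r) : ∀ n m, 0 ≤ walk r n m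
  | 0, 0 => by simp [walk]
  | 0, _ + 1 => by simp [walk]
  | n + 1, 0 => by
    have := walk_nonneg hr n 1
    rw [walk]; positivity
  | n + 1, m + 1 => by
    have := walk_nonneg hr n m
    have := walk_nonneg hr n (m + 2)
    rw [walk]; positivity

lemma walk_eq_zero_of_lt (r : ℝ) : ∀ n m, n < m → walk r n m = 0
  | 0, 0, h => by omega
  | 0, _ + 1, _ => by simp [walk]
  | n + 1, 0, h => by omega
  | n + 1, m + 1, h => by
    rw [walk, walk_eq_zero_of_lt r n m (by omega), walk_eq_zero_of_lt r n (m + 2) (by omega)]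
    simp

lemma walk_eq_zero_of_odd (r : ℝ) : ∀ n m, (n + m) % 2 = 1 → walk r n m = 0
  | 0, 0, h => by omega
  | 0, _ + 1, _ => by simp [walk]
  | n + 1, 0, h => by
    rw [walk, walk_eq_zero_of_odd r n 1 (by omega)]; simp
  | n + 1, m + 1, h => by
    rw [walk, walk_eq_zero_of_odd r n m (by omega), walk_eq_zero_of_odd r n (m + 2) (by omega)]
    simp

/-- Conservation of mass. -/
lemma hasSum_walk {r : ℝ} (hr : 0 < r) (n : ℕ) : HasSum (walk r n) 1 := by
  induction n with
  | zero =>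
    have h := hasSum_single (f := walk r 0) 0 fun m hm => walk_eq_zero_of_lt r 0 m (by omega)
    rwa [walk] at h
  | succ n ih =>
    have hsupp : ∀ f : ℕ → ℝ, Summable (fun m => f m * walk r n m) := fun f =>
      summable_of_ne_finset_zero (s := Finset.range (n + 1)) (fun m hm => by
        rw [walk_eq_zero_of_lt r n m (by simpa using hm)]; simp)
    set up : ℕ → ℝ := fun m => (m + 2 * r) / (2 * (m + r)) * walk r n m with hup
    set dn : ℕ → ℝ := fun m => m / (2 * (m + r)) * walk r n m with hdn
    have hU : Summable up := hsupp _
    have hD : Summable dn := hsupp _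
    have hsplit : ∀ m, up m + dn m = walk r n m := fun m => by
      have : (m : ℝ) + r ≠ 0 := by positivity
      simp only [hup, hdn]
      field_simp
      ring
    have htot : ∑' m, up m + ∑' m, dn m = 1 := by
      rw [← hU.tsum_add hD, ← ih.tsum_eq]
      exact tsum_congr hsplit
    have h0 : walk r (n + 1) 0 = dn 1 := by simp [walk, hdn]
    have hs : ∀ m, walk r (n + 1) (m + 1) = up m + dn (m + 2) := fun m => by
      simp [walk, hup, hdn]
    have hD2 : Summable fun m => dn (m + 2) := (summable_nat_add_iff 2).2 hD
    rw [← hasSum_nat_add_iff' 1]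
    have hsum := hU.hasSum.add hD2.hasSum
    have hd2 := hD.sum_add_tsum_nat_add 2
    have hdn0 : dn 0 = 0 := by simp [hdn]
    simp only [Finset.sum_range_succ, Finset.sum_range_zero, hdn0, zero_add] at hd2
    have hval : (1 : ℝ) - ∑ i ∈ Finset.range 1, walk r (n + 1) i
        = ∑' m, up m + ∑' m, dn (m + 2) := by
      simp only [Finset.sum_range_one, h0]
      linarith
    rw [hval]
    simpa only [hs] using hsum

lemma poch_succ (x : ℝ) (j : ℕ) : poch x (j + 1) = poch x j * (x + j) := by
  simp [poch, Finset.prod_range_succ]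

lemma poch_pos {x : ℝ} (hx : 0 < x) (j : ℕ) : 0 < poch x j :=
  Finset.prod_pos fun i _ => by positivity

lemma poch_add (x : ℝ) (m j : ℕ) : poch x (m + j) = poch x m * poch (x + m) j := by
  simp [poch, Finset.prod_range_add, add_assoc]

lemma Gamma_add_nat {x : ℝ} (hx : 0 < x) (m : ℕ) :
    Real.Gamma (m + x) = poch x m * Real.Gamma x := by
  induction m with
  | zero => simp [poch]
  | succ m ih =>
    have : ((m + 1 : ℕ) : ℝ) + x = (m + x) + 1 := by push_cast; ring
    rw [this, Real.Gamma_add_one (by positivity), ih, poch_succ]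
    ring

/-- The coefficient of the normalised Gegenbauer polynomial of degree `m` in `x ^ (m + 2 * j)`,
in closed form. -/
noncomputable def coef (r : ℝ) (m j : ℕ) : ℝ :=
  (Nat.factorial (m + 2 * j) : ℝ) * (r + m) * poch (2 * r) m /
    ((Nat.factorial m : ℝ) * 2 ^ m * Nat.factorial j * 4 ^ j * poch r (m + j + 1))

lemma walk_eq_coef {r : ℝ} (hr : 0 < r) :
    ∀ n m j : ℕ, n = m + 2 * j → walk r n m = coef r m j
  | 0, 0, j, h => by
    obtain rfl : j = 0 := by omega
    simp [walk, coef, poch, hr.ne']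
  | 0, _ + 1, _, h => by omega
  | n + 1, 0, 0, h => by omega
  | n + 1, 0, j + 1, h => by
    rw [walk, walk_eq_coef hr n 1 j (by omega)]
    have hp := (poch_pos hr (j + 1)).ne'
    have e1 : 1 + 2 * j = 2 * j + 1 := by ring
    have e2 : 0 + 2 * (j + 1) = 2 * j + 1 + 1 := by ring
    have e3 : 1 + j + 1 = j + 1 + 1 := by ring
    have e4 : 0 + (j + 1) + 1 = j + 1 + 1 := by ring
    simp only [coef, e1, e2, e3, e4, Nat.factorial_succ (2 * j + 1), Nat.factorial_succ j,
      poch_succ]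
    simp only [poch_succ] at hp
    have : r + ((j + 1 : ℕ) : ℝ) ≠ 0 := by positivity
    simp [poch]
    push_cast at *
    have hq : poch r j ≠ 0 := (poch_pos hr j).ne'
    rw [poch] at hq
    have : r + (j : ℝ) ≠ 0 := by positivity
    field_simp
    ring
  | n + 1, m + 1, 0, h => by
    rw [walk, walk_eq_coef hr n m 0 (by omega), walk_eq_zero_of_lt r n (m + 2) (by omega)]
    have hp := (poch_pos hr m).ne'
    have : r + (m : ℝ) ≠ 0 := by positivity
    have : (m : ℝ) + r ≠ 0 := by positivity
    have : r + ((m : ℝ) + 1) ≠ 0 := by positivity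
    simp only [coef, mul_zero, add_zero, poch_succ, Nat.factorial_succ]
    push_cast
    field_simp
    ring
  | n + 1, m + 1, j + 1, h => by
    rw [walk, walk_eq_coef hr n m (j + 1) (by omega), walk_eq_coef hr n (m + 2) j (by omega)]
    have hp := (poch_pos hr (m + j)).ne'
    have e1 : m + 2 * (j + 1) = m + 2 * j + 2 := by ring
    have e2 : m + 2 + 2 * j = m + 2 * j + 2 := by ring
    have e3 : m + 1 + 2 * (j + 1) = m + 2 * j + 2 + 1 := by ring
    have e4 : m + (j + 1) + 1 = m + j + 1 + 1 := by ring
    have e5 : m + 2 + j + 1 = m + j + 1 + 1 + 1 := by ring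
    have e6 : m + 1 + (j + 1) + 1 = m + j + 1 + 1 + 1 := by ring
    simp only [coef, e1, e2, e3, e4, e5, e6, Nat.factorial_succ (m + 2 * j + 2),
      Nat.factorial_succ j, Nat.factorial_succ m, Nat.factorial_succ (m + 1), poch_succ]
    push_cast
    have : (m : ℝ) + r ≠ 0 := by positivity
    have : (m : ℝ) + 2 + r ≠ 0 := by positivity
    have : r + (m + j : ℝ) ≠ 0 := by positivity
    have : r + (m + j + 1 : ℝ) ≠ 0 := by positivity
    have : r + (m + j + 1 + 1 : ℝ) ≠ 0 := by positivity
    field_simp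
    ring

/-- Legendre's duplication formula turns the prefactor of `upsilon` into a ratio of rising
factorials. -/
lemma prefactor_eq (d : ℕ) (hd : 2 ≤ d) (m : ℕ) :
    Real.sqrt π / ((2 : ℝ) ^ ((m : ℝ) + d - 2) * Real.Gamma ((d : ℝ) / 2)) *
    (Real.Gamma ((m : ℝ) + d - 1) /
      ((Nat.factorial m : ℝ) * Real.Gamma ((m : ℝ) + ((d : ℝ) - 1) / 2))) =
    poch (2 * (((d : ℝ) - 1) / 2)) m /
      (poch (((d : ℝ) - 1) / 2) m * (Nat.factorial m : ℝ) * 2 ^ m) := by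
  have hd' : (2 : ℝ) ≤ d := by exact_mod_cast hd
  obtain ⟨r, hrd⟩ : ∃ r : ℝ, r = ((d : ℝ) - 1) / 2 := ⟨_, rfl⟩
  have hr : 0 < r := by rw [hrd]; linarith
  have hdr : (d : ℝ) = 2 * r + 1 := by rw [hrd]; ring
  rw [← hrd, hdr]
  have g1 : (m : ℝ) + (2 * r + 1) - 1 = m + 2 * r := by ring
  have g2 : (2 * r + 1) / 2 = r + 1 / 2 := by ring
  have g3 : (m : ℝ) + (2 * r + 1) - 2 = m - (1 - 2 * r) := by ring
  rw [g1, g2, g3, Gamma_add_nat hr, Gamma_add_nat (by positivity : 0 < 2 * r),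
    Real.rpow_sub (by norm_num), Real.rpow_natCast]
  have hdup := Real.Gamma_mul_Gamma_add_half r
  have h1 := (Real.Gamma_pos_of_pos hr).ne'
  have h2 := (Real.Gamma_pos_of_pos (by positivity : 0 < r + 1 / 2)).ne'
  have h3 := (poch_pos hr m).ne'
  have h4 : (2 : ℝ) ^ (1 - 2 * r) ≠ 0 := (Real.rpow_pos_of_pos (by norm_num) _).ne'
  generalize (2 : ℝ) ^ (1 - 2 * r) = t at *
  generalize Real.Gamma r = a at *
  generalize Real.Gamma (r + 1 / 2) = c at *
  have hf : (Nat.factorial m : ℝ) ≠ 0 := by positivity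
  field_simp
  linear_combination (-poch (2 * r) m) * hdup

theorem stmt16 (d : ℕ) (hd : 2 ≤ d) (b : ℕ → ℝ) (hb0 : ∀ n, 0 ≤ b n) (hbs : Summable b) :
    (∀ m : ℕ, Summable (fun j : ℕ =>
      b (m + 2 * j) * (Nat.factorial (m + 2 * j) : ℝ) /
        ((Nat.factorial j : ℝ) * (2 : ℝ) ^ (2 * j) * poch ((m : ℝ) + ((d : ℝ) + 1) / 2) j))) ∧
    (∀ m : ℕ, 0 ≤ upsilon d b m) ∧
    Summable (upsilon d b) ∧
    (∑' m : ℕ, upsilon d b m) = ∑' n : ℕ, b n := by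
  have hd' : (2 : ℝ) ≤ d := by exact_mod_cast hd
  obtain ⟨r, hrd⟩ : ∃ r : ℝ, r = ((d : ℝ) - 1) / 2 := ⟨_, rfl⟩
  have hr : 0 < r := by rw [hrd]; linarith
  set A : ℕ → ℝ := fun m => poch (2 * r) m / (poch r m * (Nat.factorial m : ℝ) * 2 ^ m) with hA
  have hApos : ∀ m, 0 < A m := fun m => by
    have := poch_pos hr m
    have := poch_pos (by positivity : 0 < 2 * r) m
    simp only [hA]; positivity
  set T : ℕ → ℕ → ℝ := fun m j => b (m + 2 * j) * (Nat.factorial (m + 2 * j) : ℝ) /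
        ((Nat.factorial j : ℝ) * (2 : ℝ) ^ (2 * j) * poch ((m : ℝ) + ((d : ℝ) + 1) / 2) j) with hT
  have hups : ∀ m, upsilon d b m = A m * ∑' j, T m j := fun m => by
    rw [upsilon, prefactor_eq d hd m, ← hrd]
  have hAT : ∀ m j, A m * T m j = b (m + 2 * j) * walk r (m + 2 * j) m := fun m j => by
    rw [walk_eq_coef hr _ m j rfl, coef, add_right_comm m j 1, poch_add r (m + 1) j, poch_succ]
    have e : (m : ℝ) + ((d : ℝ) + 1) / 2 = r + ((m + 1 : ℕ) : ℝ) := by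
      rw [hrd]; push_cast; ring
    simp only [hA, hT, e]
    have h1 := (poch_pos hr m).ne'
    have h2 := (poch_pos (by positivity : 0 < r + ((m + 1 : ℕ) : ℝ)) j).ne'
    have h3 : r + (m : ℝ) ≠ 0 := by positivity
    rw [pow_mul, show (2 : ℝ) ^ 2 = 4 by norm_num]
    field_simp
  -- Summation over `n` first versus over `m` first.
  have hrow : ∀ n, HasSum (fun m => b n * walk r n m) (b n) := fun n => by
    simpa using (hasSum_walk hr n).mul_left (b n)
  have hG : Summable (fun p : ℕ × ℕ => b p.1 * walk r p.1 p.2) := by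
    refine (summable_prod_of_nonneg fun p => mul_nonneg (hb0 _) (walk_nonneg hr _ _)).2
      ⟨fun n => (hrow n).summable, ?_⟩
    simpa only [(hrow _).tsum_eq] using hbs
  have hG' : Summable (fun p : ℕ × ℕ => b p.2 * walk r p.2 p.1) := hG.prod_symm
  have hinj : ∀ m : ℕ, Function.Injective fun j : ℕ => m + 2 * j := fun m i j h => by
    simpa using h
  -- Times `n` not of the form `m + 2 * j` do not contribute to the mass at `m`.
  have hsupp : ∀ m n, n ∉ Set.range (fun j : ℕ => m + 2 * j) → b n * walk r n m = 0 := by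
    intro m n hn
    have : walk r n m = 0 := by
      by_cases hlt : n < m
      · exact walk_eq_zero_of_lt r n m hlt
      · by_cases hpar : (n + m) % 2 = 1
        · exact walk_eq_zero_of_odd r n m hpar
        · exact absurd ⟨(n - m) / 2, by dsimp only; omega⟩ hn
    rw [this, mul_zero]
  have hcol : ∀ m, HasSum (fun j => A m * T m j) (∑' n, b n * walk r n m) := fun m => by
    have h := (hG'.prod_factor m).hasSum
    rw [← (hinj m).hasSum_iff (hsupp m)] at h
    simpa only [hAT, Function.comp_def] using h
  have hups' : ∀ m, upsilon d b m = ∑' n, b n * walk r n m := fun m => by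
    rw [hups, ← tsum_mul_left, (hcol m).tsum_eq]
  refine ⟨fun m => (summable_mul_left_iff (hApos m).ne').1 (hcol m).summable, fun m => ?_, ?_, ?_⟩
  · rw [hups']
    exact tsum_nonneg fun n => mul_nonneg (hb0 _) (walk_nonneg hr _ _)
  · rw [funext hups']
    exact hG'.prod
  · rw [tsum_congr hups', hG.tsum_comm]
    exact tsum_congr fun n => (hrow n).tsum_eq
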